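/- Proposition 2: The length of the full (equally weighted) Steiner tree of the isosceles trapezium, namely 2·dist(A₁',O₁₂) + 2·dist(A₃,O₃₄) + dist(O₁₂,O₃₄), equals (a12 + a34)·(√3/2 + cos(θ/2)/(2·sin(θ/2))). -/

import Mathlib

open Real EuclideanGeometry

noncomputable def pt (x y : ℝ) : EuclideanSpace ℝ (Fin 2) :=
  (WithLp.equiv 2 (Fin 2 → ℝ)).symm ![x, y]

/-!
Each edge from a vertex to its Steiner point makes an angle of 30° with the bases, so it is twice
as long as its vertical extent, while the remaining edge is vertical. The four slanted edges and
the vertical one therefore add up to `d + √3 / 2 * (a12 + a34)`, the height of the trapezium plus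
those of the equilateral triangles erected outwards on its bases. Finally `tan (θ / 2)` expresses
`d` in terms of `a12 + a34`.
-/

theorem dist_pt (x y u v : ℝ) : dist (pt x y) (pt u v) = √((x - u) ^ 2 + (y - v) ^ 2) := by
  simp [EuclideanSpace.dist_eq, pt, Real.dist_eq]

theorem dist_pt_same_fst (x y v : ℝ) : dist (pt x y) (pt x v) = |y - v| := by
  simp [dist_pt, sqrt_sq_eq_abs]

-- The hypothesis says that the segment makes an angle of 30° with the horizontal.
theorem dist_pt_of_sq_sub_eq_three_mul {x y u v : ℝ} (h : (x - u) ^ 2 = 3 * (y - v) ^ 2) :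
    dist (pt x y) (pt u v) = 2 * |y - v| :=
  calc dist (pt x y) (pt u v) = √((2 * (y - v)) ^ 2) := by rw [dist_pt, h]; ring_nf
    _ = 2 * |y - v| := by rw [sqrt_sq_eq_abs, abs_mul, abs_two]

theorem sq_half_eq_three_mul_sq_div (a : ℝ) : (a / 2) ^ 2 = 3 * (a / (2 * √3)) ^ 2 := by
  rw [div_pow, div_pow, mul_pow, sq_sqrt zero_le_three]
  ring

theorem div_two_mul_sqrt_three_le_half {a : ℝ} (ha : 0 ≤ a) : a / (2 * √3) ≤ a / 2 := by
  have one_le : 1 ≤ √3 := one_le_sqrt.2 (by norm_num)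
  gcongr
  linarith

theorem div_two_mul_sqrt_three_le_sub_of_max_le {a b d : ℝ} (ha : 0 ≤ a) (hb : 0 ≤ b)
    (hd : max a b ≤ d) : b / (2 * √3) ≤ d - a / (2 * √3) := by
  have upper_offset := div_two_mul_sqrt_three_le_half ha
  have lower_offset := div_two_mul_sqrt_three_le_half hb
  linarith [le_max_left a b, le_max_right a b]

theorem steinerTree_length {a b d : ℝ} (ha : 0 ≤ a) (hb : 0 ≤ b)
    (hd : b / (2 * √3) ≤ d - a / (2 * √3)) :
    2 * dist (pt (-(a / 2)) d) (pt 0 (d - a / (2 * √3)))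
      + 2 * dist (pt (b / 2) 0) (pt 0 (b / (2 * √3)))
      + dist (pt 0 (d - a / (2 * √3))) (pt 0 (b / (2 * √3)))
      = d + √3 / 2 * (a + b) := by
  have upper_edge : dist (pt (-(a / 2)) d) (pt 0 (d - a / (2 * √3))) = 2 * (a / (2 * √3)) := by
    rw [dist_pt_of_sq_sub_eq_three_mul (by simpa using sq_half_eq_three_mul_sq_div a),
      sub_sub_cancel, abs_of_nonneg (by positivity)]
  have lower_edge : dist (pt (b / 2) 0) (pt 0 (b / (2 * √3))) = 2 * (b / (2 * √3)) := by
    rw [dist_pt_of_sq_sub_eq_three_mul (by simpa using sq_half_eq_three_mul_sq_div b), zero_sub,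
      abs_neg, abs_of_nonneg (by positivity)]
  have middle_edge : dist (pt 0 (d - a / (2 * √3))) (pt 0 (b / (2 * √3)))
      = d - a / (2 * √3) - b / (2 * √3) := by
    rw [dist_pt_same_fst, abs_of_nonneg (sub_nonneg.2 hd)]
  have sq_sqrt_three : √3 ^ 2 = 3 := sq_sqrt zero_le_three
  rw [upper_edge, lower_edge, middle_edge]
  field_simp
  linear_combination -(a + b) * sq_sqrt_three

theorem cos_arctan_div_sin_arctan (t : ℝ) : cos (arctan t) / sin (arctan t) = t⁻¹ := by
  rw [← inv_div, ← tan_eq_sin_div_cos, tan_arctan]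

theorem stmt_8_general {a12 a34 d θ : ℝ} (ha12 : 0 ≤ a12) (ha34 : 0 ≤ a34)
    (hpos : 0 < a12 + a34) (hd : a34 / (2 * √3) ≤ d - a12 / (2 * √3))
    (hθ : θ = 2 * arctan ((a12 + a34) / (2 * d))) :
    2 * dist (pt (-(a12 / 2)) d) (pt 0 (d - a12 / (2 * √3)))
      + 2 * dist (pt (a34 / 2) 0) (pt 0 (a34 / (2 * √3)))
      + dist (pt 0 (d - a12 / (2 * √3))) (pt 0 (a34 / (2 * √3)))
      = (a12 + a34) * (√3 / 2 + cos (θ / 2) / (2 * sin (θ / 2))) := by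
  have half_angle : θ / 2 = arctan ((a12 + a34) / (2 * d)) := by rw [hθ]; ring
  have cot_half_angle : cos (θ / 2) / sin (θ / 2) = 2 * d / (a12 + a34) := by
    rw [half_angle, cos_arctan_div_sin_arctan, inv_div]
  rw [steinerTree_length ha12 ha34 hd, mul_comm 2 (sin _), ← div_div, cot_half_angle]
  field_simp
  ring

theorem stmt_8 (a12 a34 d θ : ℝ) (ha12 : 0 < a12) (ha34 : 0 < a34)
    (hd : max a12 a34 < d)
    (hθ : θ = 2 * Real.arctan ((a12 + a34) / (2 * d)))
    (A₁' A₂' A₃ A₄ O₁₂ O₃₄ : EuclideanSpace ℝ (Fin 2))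
    (hA₁ : A₁' = pt (-(a12 / 2)) d) (hA₂ : A₂' = pt (a12 / 2) d)
    (hA₃ : A₃ = pt (a34 / 2) 0) (hA₄ : A₄ = pt (-(a34 / 2)) 0)
    (hO₁₂ : O₁₂ = pt 0 (d - a12 / (2 * Real.sqrt 3)))
    (hO₃₄ : O₃₄ = pt 0 (a34 / (2 * Real.sqrt 3))) :
    2 * dist A₁' O₁₂ + 2 * dist A₃ O₃₄ + dist O₁₂ O₃₄ =
    (a12 + a34) * (Real.sqrt 3 / 2 + Real.cos (θ / 2) / (2 * Real.sin (θ / 2))) := by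
  rw [hA₁, hA₃, hO₁₂, hO₃₄]
  exact stmt_8_general ha12.le ha34.le (add_pos ha12 ha34)
    (div_two_mul_sqrt_three_le_sub_of_max_le ha12.le ha34.le hd.le) hθ
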